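/- Let F be a field, f, g ∈ F[x₁,…,xₙ] with deg f = d, where char F = 0 or char F > d. Suppose a ∈ Fⁿ satisfies f(x+a) = g(x). Then for b ∈ Fⁿ, the identity f(x+b) = g(x) holds if and only if for every 0 ≤ i ≤ d the first-order directional derivatives of the degree-i homogeneous component of f in directions a and b coincide: f_i^{(1)}(a,x) = f_i^{(1)}(b,x). -/

import Mathlib

/-!
Put `c = b - a`. Both sides of the equivalence only concern `c`: the left one says
`f(x + c) = f(x)`, and since `∂_c := ∑ cᵢ ∂/∂xᵢ` lowers degrees by exactly one, the right one says
`∂_c f = 0`. To compare these two conditions, consider the restriction of `f` to the line through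
the generic point `x` in direction `c`, i.e. `P(T) = f(x + T c)` as a univariate polynomial over
`F[x₁, …, xₙ]`. It has degree at most `d`, and `P'(T) = (∂_c f)(x + T c)`.

* If `f(x + c) = f(x)`, then `P(k) = f` for every natural number `k`. Since `0, 1, …, d` are
  distinct in `F`, the polynomial `P` is constant and `∂_c f = P'(0) = 0`.
* If `∂_c f = 0`, then `P' = 0`. Since `1, …, d` are nonzero in `F`, the polynomial `P` is
  constant and `f(x + c) = P(1) = P(0) = f(x)`.
-/

open MvPolynomial

/-- Shift of a multivariate polynomial: `shift a f = f(x + a)`. -/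
noncomputable def shift {F : Type*} [CommRing F] {n : ℕ} (a : Fin n → F)
    (f : MvPolynomial (Fin n) F) : MvPolynomial (Fin n) F :=
  aeval (fun i => X i + C (a i)) f

/-- Iterated partial derivative `∂^r f / (∂x_{e 1} ⋯ ∂x_{e r})`. -/
noncomputable def pderivMulti {F : Type*} [CommRing F] {n r : ℕ} (e : Fin r → Fin n)
    (f : MvPolynomial (Fin n) F) : MvPolynomial (Fin n) F :=
  (List.ofFn e).foldl (fun p i => pderiv i p) f

/-- Order-`r` directional derivative of `f` in direction `a`:
`∑_{e ∈ [n]^r} (∏_k a_{e k}) • ∂^r f/(∂x_{e 1} ⋯ ∂x_{e r})`. -/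
noncomputable def dirDeriv {F : Type*} [CommRing F] {n : ℕ} (a : Fin n → F) (r : ℕ)
    (f : MvPolynomial (Fin n) F) : MvPolynomial (Fin n) F :=
  ∑ e : Fin r → Fin n, (∏ k, a (e k)) • pderivMulti e f

section

variable {F : Type*} [Field F] {n : ℕ}

/-- The derivation `∑ᵢ cᵢ ∂/∂xᵢ`, characterised by `xᵢ ↦ cᵢ`. -/
noncomputable def dirDer (c : Fin n → F) :
    Derivation F (MvPolynomial (Fin n) F) (MvPolynomial (Fin n) F) :=
  mkDerivation F (fun i => C (c i))

lemma dirDer_eq_sum (c : Fin n → F) (f : MvPolynomial (Fin n) F) :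
    dirDer c f = ∑ i, c i • pderiv i f := by
  have hs : ∀ g, (∑ i, c i • pderiv (R := F) i) g = ∑ i, c i • pderiv i g := fun g => by
    have := congrFun (map_sum Derivation.coeFnAddMonoidHom
      (fun i => c i • pderiv (R := F) i) Finset.univ) g
    rwa [Finset.sum_apply] at this
  have h : dirDer c = ∑ i, c i • pderiv (R := F) i := by
    apply MvPolynomial.derivation_ext
    intro j
    rw [hs]
    simp [dirDer, mkDerivation_X, pderiv_X, Pi.single_apply, MvPolynomial.smul_eq_C_mul]
  rw [h, hs]

lemma dirDeriv_one (c : Fin n → F) (f : MvPolynomial (Fin n) F) :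
    dirDeriv c 1 f = dirDer c f := by
  rw [dirDer_eq_sum, dirDeriv]
  refine Fintype.sum_equiv (Equiv.funUnique (Fin 1) (Fin n)) _ _ fun e => ?_
  simp [pderivMulti]

lemma dirDer_sub (a b : Fin n → F) (f : MvPolynomial (Fin n) F) :
    dirDer (b - a) f = dirDer b f - dirDer a f := by
  simp [dirDer_eq_sum, sub_smul]

lemma homogeneousComponent_dirDer (c : Fin n → F) (f : MvPolynomial (Fin n) F) (i : ℕ) :
    homogeneousComponent i (dirDer c f) = dirDer c (homogeneousComponent (i + 1) f) := by
  have hom : ∀ j, (dirDer c (homogeneousComponent (j + 1) f)).IsHomogeneous j := by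
    intro j
    rw [dirDer_eq_sum]
    refine IsHomogeneous.sum _ _ _ fun k _ => ?_
    rw [smul_eq_C_mul]
    simpa using (isHomogeneous_C (Fin n) (c k)).mul
      ((homogeneousComponent_isHomogeneous (j + 1) f).pderiv (i := k))
  conv_lhs => rw [← sum_homogeneousComponent f]
  rw [map_sum, map_sum, Finset.sum_range_succ']
  have h0 : dirDer c (homogeneousComponent 0 f) = 0 := by
    rw [homogeneousComponent_zero]
    exact (dirDer c).map_algebraMap _
  rw [h0, map_zero, add_zero]
  have hj : ∀ j, homogeneousComponent i (dirDer c (homogeneousComponent (j + 1) f)) =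
      if i = j then dirDer c (homogeneousComponent (j + 1) f) else 0 := fun j =>
    homogeneousComponent_of_mem (hom j)
  simp only [hj, Finset.sum_ite_eq, Finset.mem_range]
  split_ifs with h
  · rfl
  · rw [homogeneousComponent_eq_zero _ _ (by omega), map_zero]

lemma dirDer_eq_zero_iff (c : Fin n → F) (f : MvPolynomial (Fin n) F) :
    dirDer c f = 0 ↔ ∀ i, i ≤ f.totalDegree → dirDer c (homogeneousComponent i f) = 0 := by
  constructor
  · rintro h (_ | i) -
    · rw [homogeneousComponent_zero]
      exact (dirDer c).map_algebraMap _
    · rw [← homogeneousComponent_dirDer, h, map_zero]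
  · intro h
    conv_lhs => rw [← sum_homogeneousComponent f]
    rw [map_sum]
    exact Finset.sum_eq_zero fun i hi => h i (by simpa [Nat.lt_succ_iff] using hi)

lemma shift_shift (a b : Fin n → F) (f : MvPolynomial (Fin n) F) :
    shift a (shift b f) = shift (a + b) f := by
  simp only [shift]
  rw [← AlgHom.comp_apply]
  congr 1
  ext1 i
  simp [add_assoc]

lemma shift_zero (f : MvPolynomial (Fin n) F) : shift 0 f = f := by
  simp [shift]

/-- Two shifts of `f` agree iff `f` is invariant under their difference. -/
lemma shift_eq_shift_iff (a b : Fin n → F) (f : MvPolynomial (Fin n) F) :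
    shift b f = shift a f ↔ shift (b - a) f = f := by
  constructor
  · intro h
    have := congrArg (shift (-a)) h
    rwa [shift_shift, shift_shift, neg_add_cancel, shift_zero, neg_add_eq_sub] at this
  · intro h
    have := congrArg (shift a) h
    rwa [shift_shift, add_sub_cancel] at this

/-- The restriction `f(x + T c)` of `f` to the line through the generic point `x` in direction
`c`, as a polynomial in `T` over `F[x₁, …, xₙ]`. -/
noncomputable def line (c : Fin n → F) :
    MvPolynomial (Fin n) F →ₐ[F] Polynomial (MvPolynomial (Fin n) F) :=
  aeval (fun i => Polynomial.C (X i) + Polynomial.C (C (c i)) * Polynomial.X)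

lemma eval_line (c : Fin n → F) (t : F) (f : MvPolynomial (Fin n) F) :
    (line c f).eval (C t) = shift (t • c) f := by
  induction f using MvPolynomial.induction_on with
  | C r => simp [line, shift, algebraMap_eq, Polynomial.algebraMap_apply]
  | add p q hp hq => simpa [shift] using congrArg₂ (· + ·) hp hq
  | mul_X p i hp =>
    rw [map_mul, Polynomial.eval_mul, hp]
    simp [line, shift]
    ring_nf
    simp

lemma derivative_line (c : Fin n → F) (f : MvPolynomial (Fin n) F) :
    Polynomial.derivative (line c f) = line c (dirDer c f) := by
  induction f using MvPolynomial.induction_on with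
  | C r =>
    have h : dirDer c (C r) = 0 := (dirDer c).map_algebraMap r
    rw [h]
    simp [line, Polynomial.algebraMap_apply]
  | add p q hp hq => simp [hp, hq]
  | mul_X p i hp =>
    rw [map_mul, Polynomial.derivative_mul, hp, Derivation.leibniz]
    simp [line, dirDer, Polynomial.algebraMap_apply, algebraMap_eq]
    ring

lemma natDegree_line_le (c : Fin n → F) (f : MvPolynomial (Fin n) F) :
    (line c f).natDegree ≤ f.totalDegree := by
  rw [line, aeval_def, eval₂_eq]
  refine Polynomial.natDegree_sum_le_of_forall_le _ _ fun m hm => ?_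
  rw [Polynomial.algebraMap_apply]
  refine (Polynomial.natDegree_C_mul_le _ _).trans ?_
  refine (Polynomial.natDegree_prod_le _ _).trans ?_
  refine le_trans ?_ (le_totalDegree hm)
  refine Finset.sum_le_sum fun i _ => ?_
  refine Polynomial.natDegree_pow_le.trans ?_
  have : (Polynomial.C (X i) + Polynomial.C (C (c i)) * Polynomial.X :
      Polynomial (MvPolynomial (Fin n) F)).natDegree ≤ 1 := by
    compute_degree
  simpa using Nat.mul_le_mul_left (m i) this

/-- Infinitesimal and actual invariance of `f` under translation along `c` agree as long as no
positive integer up to the degree of `f` vanishes in `F`. -/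
lemma shift_eq_self_iff (f : MvPolynomial (Fin n) F)
    (hF : ∀ k : ℕ, 0 < k → k ≤ f.totalDegree → (k : F) ≠ 0) (c : Fin n → F) :
    shift c f = f ↔ dirDer c f = 0 := by
  have e0 : (line c f).eval 0 = f := by simpa [shift_zero] using eval_line c 0 f
  have e1 : (line c f).eval 1 = shift c f := by simpa using eval_line c 1 f
  constructor
  · intro h
    have hk : ∀ k : ℕ, shift ((k : F) • c) f = f := by
      intro k
      induction k with
      | zero => simp [shift_zero]
      | succ k ih =>
        rw [Nat.cast_succ, add_smul, one_smul, ← shift_shift, h, ih]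
    have inj : Function.Injective
        (fun k : Fin (f.totalDegree + 1) => (C ((k : ℕ) : F) : MvPolynomial (Fin n) F)) := by
      have key : ∀ j k : ℕ, j < k → k ≤ f.totalDegree → (j : F) ≠ k := by
        intro j k hjk hkd he
        refine hF (k - j) (by omega) (by omega) ?_
        rw [Nat.cast_sub hjk.le, he, sub_self]
      intro j k hjk
      have hjk' : ((j : ℕ) : F) = ((k : ℕ) : F) := C_injective _ _ hjk
      rcases lt_trichotomy (j : ℕ) k with h' | h' | h'
      · exact absurd hjk' (key _ _ h' (by omega))
      · exact Fin.ext h'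
      · exact absurd hjk'.symm (key _ _ h' (by omega))
    have hconst : line c f - Polynomial.C f = 0 := by
      refine Polynomial.eq_zero_of_natDegree_lt_card_of_eval_eq_zero _ inj (fun k => ?_) ?_
      · rw [Polynomial.eval_sub, eval_line, hk, Polynomial.eval_C, sub_self]
      · rw [Polynomial.natDegree_sub_C, Fintype.card_fin]
        exact Nat.lt_succ_of_le (natDegree_line_le c f)
    have hd : line c (dirDer c f) = 0 := by
      rw [← derivative_line, sub_eq_zero.mp hconst, Polynomial.derivative_C]
    have := eval_line c 0 (dirDer c f)
    rwa [hd, zero_smul, shift_zero, Polynomial.eval_zero, eq_comm] at this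
  · intro h
    have hd : Polynomial.derivative (line c f) = 0 := by rw [derivative_line, h, map_zero]
    have hdeg : (line c f).natDegree = 0 := by
      by_contra hne
      obtain ⟨m, hm⟩ := Nat.exists_eq_succ_of_ne_zero hne
      have hcoeff := congrArg (fun p => Polynomial.coeff p m) hd
      simp only [Polynomial.coeff_derivative, Polynomial.coeff_zero] at hcoeff
      rcases mul_eq_zero.mp hcoeff with h' | h'
      · rw [show m + 1 = (line c f).natDegree from hm.symm, Polynomial.coeff_natDegree,
          Polynomial.leadingCoeff_eq_zero] at h'
        simp [h'] at hne
      · refine hF (m + 1) m.succ_pos (hm.symm.trans_le (natDegree_line_le c f)) ?_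
        apply C_injective (Fin n) F
        simpa using h'
    rw [Polynomial.eq_C_of_natDegree_eq_zero hdeg, Polynomial.eval_C] at e0 e1
    rw [← e1, e0]

end

/-- For `f` of degree `d` (char `0` or `> d`) with `f(x+a) = g(x)`:
`f(x+b) = g(x)` iff `f_i^{(1)}(a,x) = f_i^{(1)}(b,x)` for every `0 ≤ i ≤ d`. -/
theorem shift_eq_iff_dirDeriv_one_homogeneousComponents_eq
    {F : Type*} [Field F] {n : ℕ} (f g : MvPolynomial (Fin n) F) (d : ℕ)
    (hdeg : f.totalDegree = d) (hchar : ringChar F = 0 ∨ d < ringChar F)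
    (a : Fin n → F) (ha : shift a f = g) (b : Fin n → F) :
    shift b f = g ↔
      ∀ i, i ≤ d →
        dirDeriv a 1 (homogeneousComponent i f) = dirDeriv b 1 (homogeneousComponent i f) := by
  subst ha
  have hF : ∀ k : ℕ, 0 < k → k ≤ f.totalDegree → (k : F) ≠ 0 := by
    intro k hk hkd h0
    have hdvd := (ringChar.spec F k).mp h0
    rcases hchar with h | h
    · rw [h, zero_dvd_iff] at hdvd
      omega
    · have := Nat.le_of_dvd hk hdvd
      omega
  rw [shift_eq_shift_iff, shift_eq_self_iff f hF, dirDer_eq_zero_iff, hdeg]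
  refine forall₂_congr fun i _ => ?_
  rw [dirDer_sub, dirDeriv_one, dirDeriv_one, sub_eq_zero, eq_comm]
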